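/- Let X, Y be objects of A, viewed as objects of K^b(A)/𝔻. Then any morphism e : X → Y in K^b(A)/𝔻 can be presented as h ∘ q⁻¹ for some object Z of K^b(A), h ∈ K^b(A)(Z, Y) and q ∈ K^b(A)(Z, X) with Cone(q) ∈ D. Moreover, for such a presentation, e = 0 if and only if h can be factored in K^b(A) through an object T that fits into a distinguished triangle C₋₁ → T → C₀ with C₋₁ ∈ D[−1] and C₀ ∈ D. -/

import Mathlib

open CategoryTheory Limits Pretriangulated ZeroObject

universe v u v' u'

section TriangulatedPrelude

variable {C : Type u} [Category.{v} C] [HasZeroObject C] [HasShift C ℤ] [Preadditive C]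
  [∀ n : ℤ, (shiftFunctor C n).Additive] [Pretriangulated C]

/-- The objects of the smallest strict full triangulated subcategory of `C`
containing the set of objects `B`. -/
inductive genSub (B : Set C) : C → Prop
  | of (X : C) (hX : X ∈ B) : genSub B X
  | zero (X : C) (hX : IsZero X) : genSub B X
  | shift (X : C) (n : ℤ) (hX : genSub B X) : genSub B (X⟦n⟧)
  | ext₂ (T : Triangle C) (hT : T ∈ distTriang C) (h₁ : genSub B T.obj₁)
      (h₃ : genSub B T.obj₃) : genSub B T.obj₂

/-- The triangulated subcategory of `C` generated by `B`. -/
def genSubcat (B : Set C) : ObjectProperty C :=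
  genSub B

instance (B : Set C) : (genSubcat B).IsTriangulated where
  exists_zero := ⟨0, isZero_zero _, genSub.zero _ (isZero_zero _)⟩
  isStableUnderShiftBy n := ⟨fun X h => genSub.shift X n h⟩
  ext₂' T hT h₁ h₃ := ObjectProperty.le_isoClosure _ _ (genSub.ext₂ T hT h₁ h₃)

/-- The extension-closure of a class of objects `E`: the smallest class containing `E`
and `0` and such that for any distinguished triangle `X ⟶ Y ⟶ Z` with `X, Z` in the
class, `Y` is also in the class. -/
inductive extClosure (E : Set C) : C → Prop
  | of (X : C) (hX : X ∈ E) : extClosure E X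
  | zero (X : C) (hX : IsZero X) : extClosure E X
  | ext₂ (T : Triangle C) (hT : T ∈ distTriang C) (h₁ : extClosure E T.obj₁)
      (h₃ : extClosure E T.obj₃) : extClosure E T.obj₂

/-- `D_{[i,j]}`: the extension-closure of `∪_{i ≤ l ≤ j} D[l]`. -/
def shiftClosure (D : Set C) (i j : ℤ) : Set C :=
  extClosure {X | ∃ (Y : C) (l : ℤ), i ≤ l ∧ l ≤ j ∧ Y ∈ D ∧ X = Y⟦l⟧}

/-- `D_{≥ i} = ∪_{k ≥ i} D_{[i,k]}`. -/
def shiftClosureGE (D : Set C) (i : ℤ) : Set C := {X | ∃ k, i ≤ k ∧ X ∈ shiftClosure D i k}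

/-- `D_{≤ j} = ∪_{k ≤ j} D_{[k,j]}`. -/
def shiftClosureLE (D : Set C) (j : ℤ) : Set C := {X | ∃ k, k ≤ j ∧ X ∈ shiftClosure D k j}

/-- A set of objects `D` is weakly negative if `0 ∈ D` and `Hom(X, Y[i]) = 0`
for all `X, Y ∈ D` and all `i ≥ 2`. -/
def WeaklyNegative (D : Set C) : Prop :=
  (0 : C) ∈ D ∧ ∀ X ∈ D, ∀ Y ∈ D, ∀ i : ℤ, 2 ≤ i → ∀ f : X ⟶ (Y⟦i⟧), f = 0

end TriangulatedPrelude

attribute [local instance] Limits.hasBinaryBiproducts_of_finite_biproducts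

section KPrelude

variable {A : Type u} [Category.{v} A] [Preadditive A] [HasZeroObject A] [HasFiniteBiproducts A]

/-- The two-term cochain complex with `P` in degree `n` and `Q` in degree `n + 1`,
with differential given by `f : P ⟶ Q` (and all other terms `0`).
In particular, `twoComplex (-1) f` is the cone of a morphism `f` of `A`. -/
noncomputable def twoComplex (n : ℤ) {P Q : A} (f : P ⟶ Q) : CochainComplex A ℤ where
  X i := if i = n then P else if i = n + 1 then Q else 0
  d i j :=
    if hij : i = n ∧ j = n + 1 then
      eqToHom (by simp [hij.1]) ≫ f ≫
        eqToHom (by simp [hij.2, show ¬ ((n : ℤ) + 1 = n) by omega])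
    else 0
  shape i j hij := by
    rw [dif_neg]
    rintro ⟨rfl, rfl⟩
    exact hij rfl
  d_comp_d' i j k _ _ := by
    by_cases h1 : i = n ∧ j = n + 1
    · by_cases h2 : j = n ∧ k = n + 1
      · obtain ⟨h1a, h1b⟩ := h1; obtain ⟨h2a, h2b⟩ := h2; omega
      · rw [dif_neg h2, comp_zero]
    · rw [dif_neg h1, zero_comp]

/-- The chain map from the two-term complex (in degrees `n`, `n + 1`) determined by
`f : P ⟶ Q` to the complex concentrated in degree `n` with value `M`, whose degree `n`
component is `g : P ⟶ M`. -/
noncomputable def twoComplexToSingle (n : ℤ) {P Q M : A} (f : P ⟶ Q) (g : P ⟶ M) :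
    twoComplex n f ⟶ (HomologicalComplex.single A (ComplexShape.up ℤ) n).obj M where
  f i :=
    if h : i = n then
      eqToHom (by simp [twoComplex, h]) ≫ g ≫
        (HomologicalComplex.singleObjXSelf (ComplexShape.up ℤ) n M).inv ≫ eqToHom (by rw [h])
    else 0
  comm' i j hij := by
    simp only [ComplexShape.up_Rel] at hij
    by_cases hj : j = n
    · have hi : ¬ (i = n ∧ j = n + 1) := by rintro ⟨rfl, rfl⟩; omega
      have hd : (twoComplex n f).d i j = 0 := by
        dsimp [twoComplex]; rw [dif_neg hi]; rfl
      rw [hd, zero_comp]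
      have : i ≠ n := by omega
      rw [dif_neg this, zero_comp]
    · rw [dif_neg hj]
      rw [comp_zero]
      have : ((HomologicalComplex.single A (ComplexShape.up ℤ) n).obj M).d i j = 0 := by simp
      rw [this, comp_zero]

/-- The quotient functor `C^b(A) ⥤ K(A)` (restricted from all complexes). -/
noncomputable abbrev homotopyQ : CochainComplex A ℤ ⥤ HomotopyCategory A (ComplexShape.up ℤ) :=
  HomotopyCategory.quotient A (ComplexShape.up ℤ)

/-- The canonical embedding of `A` into the homotopy category, as complexes concentrated
in degree `0`. -/
noncomputable abbrev iotaA : A ⥤ HomotopyCategory A (ComplexShape.up ℤ) :=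
  HomologicalComplex.single A (ComplexShape.up ℤ) 0 ⋙ homotopyQ

/-- `B`: the set of cones of elements of `S`, viewed in the homotopy category. -/
def coneSet (S : MorphismProperty A) : Set (HomotopyCategory A (ComplexShape.up ℤ)) :=
  {X | ∃ (P Q : A) (s : P ⟶ Q), S s ∧ X = homotopyQ.obj (twoComplex (-1) s)}

/-- The Verdier localization functor of the homotopy category by the triangulated
subcategory `𝔻` generated by the cones of elements of `S`. -/
noncomputable abbrev locQ (S : MorphismProperty A) :
    HomotopyCategory A (ComplexShape.up ℤ) ⥤ (genSubcat (coneSet S)).trW.Localization :=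
  (genSubcat (coneSet S)).trW.Q

/-- The composite functor `A ⥤ K(A) ⥤ K(A)/𝔻`. -/
noncomputable abbrev uBig (S : MorphismProperty A) :
    A ⥤ (genSubcat (coneSet S)).trW.Localization :=
  iotaA ⋙ locQ S

/-- `A[S⁻¹]_add`: the full subcategory of the Verdier quotient whose
objects are those of `A` (viewed as complexes concentrated in degree `0`). -/
def AddLoc (S : MorphismProperty A) : Type u := A

noncomputable instance (S : MorphismProperty A) : Category (AddLoc S) where
  Hom X Y := (uBig S).obj X ⟶ (uBig S).obj Y
  id X := 𝟙 ((uBig S).obj X)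
  comp f g := f ≫ g

/-- The canonical functor `u : A ⥤ A[S⁻¹]_add` induced by the localization functor. -/
noncomputable def uFun (S : MorphismProperty A) : A ⥤ AddLoc S where
  obj X := X
  map f := (uBig S).map f
  map_id X := (uBig S).map_id X
  map_comp f g := (uBig S).map_comp f g

noncomputable instance (S : MorphismProperty A) : Preadditive (AddLoc S) where
  homGroup X Y := inferInstanceAs (AddCommGroup ((uBig S).obj X ⟶ (uBig S).obj Y))
  add_comp P Q R f f' g :=
    @Preadditive.add_comp _ _ _ ((uBig S).obj P) ((uBig S).obj Q) ((uBig S).obj R) f f' g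
  comp_add P Q R f g g' :=
    @Preadditive.comp_add _ _ _ ((uBig S).obj P) ((uBig S).obj Q) ((uBig S).obj R) f g g'

end KPrelude

/-- An object of the homotopy category is bounded if its underlying complex has only
finitely many nonzero terms. -/
def boundedK {A : Type u} [Category.{v} A] [Preadditive A] [HasZeroObject A]
    [HasFiniteBiproducts A]
    (X : HomotopyCategory A (ComplexShape.up ℤ)) : Prop :=
  ∃ a b : ℤ, ∀ i : ℤ, (i < a ∨ b < i) → IsZero ((X.as).X i)

/-!
Write `D_{[i,j]}` for the extension-closure of the shifts `Q⟦l⟧` with `Q ∈ B` and `i ≤ l ≤ j`.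
Every object of the triangulated subcategory `𝔻` generated by `B` lies in some `D_{[i,j]}`.
Since `Hom(B, B⟦l⟧) = 0` for `l ≥ 2`, extensions in the wrong order split and can be swapped, so
`D_{[i,j]}` consists of the extensions of an object of `D_{[k+1,j]}` by one of `D_{[i,k]}`.

Start with any roof presenting a morphism `X ⟶ Y` of the quotient, its cone lying in `D_{[i,j]}`.
There is no nonzero map from `X` to `Q⟦l⟧` for `l ≥ 1`, which allows one to replace the cone by its
part in `D_{[i,0]}`. There is no nonzero map from `Q⟦l⟧` to `Y` for `l ≤ -2`, so by the octahedral
axiom the roof factors through one whose cone is the part in `D_{[0,0]} = D`.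

A roof vanishes in the quotient if and only if its numerator `Z ⟶ Y` factors through an object
of `𝔻`. The orthogonality of `X` passes to `Z` because the cone of `Z ⟶ X` is in `D`, and the same
two truncations bring the intermediate object into `D_{[-1,0]}`.
-/

section WeaklyNegativeHoms

variable {C : Type u} [Category.{v} C] [HasShift C ℤ] [Preadditive C]

/-- The vanishing condition in `WeaklyNegative`, without the requirement that `0` belong
to the set: a set of cones need not contain `0`. -/
def HasWeaklyNegativeHoms (B : Set C) : Prop :=
  ∀ P ∈ B, ∀ Q ∈ B, ∀ i : ℤ, 2 ≤ i → ∀ f : P ⟶ Q⟦i⟧, f = 0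

lemma HasWeaklyNegativeHoms.shift_hom_eq_zero {B : Set C} (hB : HasWeaklyNegativeHoms B) {P Q : C}
    (hP : P ∈ B) (hQ : Q ∈ B) {a b : ℤ} (hab : a + 2 ≤ b) (f : P⟦a⟧ ⟶ Q⟦b⟧) : f = 0 := by
  let e : Q⟦b⟧ ≅ Q⟦b - a⟧⟦a⟧ := (shiftFunctorAdd' C (b - a) a b (by lia)).app Q
  obtain ⟨g, hg⟩ := (shiftFunctor C a).map_surjective (f ≫ e.hom)
  rw [← cancel_mono e.hom, zero_comp, ← hg, hB P hP Q hQ (b - a) (by lia) g, Functor.map_zero]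

end WeaklyNegativeHoms

section TriangulatedCategory

variable {C : Type u} [Category.{v} C] [HasZeroObject C] [HasShift C ℤ] [Preadditive C]
  [∀ n : ℤ, (shiftFunctor C n).Additive] [Pretriangulated C]

section ExtensionClosure

lemma isClosedUnderIsomorphisms_of_ext₂ {P : ObjectProperty C} (zero : ∀ X, IsZero X → P X)
    (ext₂ : ∀ T ∈ distTriang C, P T.obj₁ → P T.obj₃ → P T.obj₂) :
    P.IsClosedUnderIsomorphisms where
  of_iso {X Y} e hX := by
    refine ext₂ (Triangle.mk e.hom (0 : Y ⟶ 0) 0) ?_ hX (zero _ (isZero_zero _))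
    rw [Triangle.distinguished_iff_of_isZero₃ _ (isZero_zero _)]
    exact inferInstanceAs (IsIso e.hom)

instance (B : Set C) : (genSubcat B).IsClosedUnderIsomorphisms :=
  isClosedUnderIsomorphisms_of_ext₂ genSub.zero genSub.ext₂

/-- The extension-closure `extClosure E`, bundled as an `ObjectProperty` in the same way as
`genSubcat` bundles `genSub`. -/
def extensionClosure (E : Set C) : ObjectProperty C :=
  extClosure E

namespace extensionClosure

instance (E : Set C) : (extensionClosure E).ContainsZero where
  exists_zero := ⟨0, isZero_zero _, extClosure.zero _ (isZero_zero _)⟩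

instance (E : Set C) : (extensionClosure E).IsClosedUnderIsomorphisms :=
  isClosedUnderIsomorphisms_of_ext₂ extClosure.zero extClosure.ext₂

instance (E : Set C) : (extensionClosure E).IsTriangulatedClosed₂ :=
  .mk' extClosure.ext₂

lemma le_of_forall_mem {E : Set C} {P : ObjectProperty C} [P.ContainsZero]
    [P.IsClosedUnderIsomorphisms] [P.IsTriangulatedClosed₂] (h : ∀ X ∈ E, P X) :
    extensionClosure E ≤ P := by
  intro X hX
  induction hX with
  | of X hX => exact h X hX
  | zero X hX => exact P.prop_of_isZero hX
  | ext₂ T hT _ _ h₁ h₃ => exact P.ext_of_isTriangulatedClosed₂ T hT h₁ h₃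

lemma le_genSubcat (B : Set C) : extensionClosure B ≤ genSubcat B :=
  le_of_forall_mem genSub.of

end extensionClosure

end ExtensionClosure

section ExtensionProduct

variable {P Q : ObjectProperty C}

lemma extensionProduct_le_swap
    (h : ∀ ⦃Y Z : C⦄, P Y → Q Z → ∀ f : Z ⟶ Y⟦(1 : ℤ)⟧, f = 0) :
    P.extensionProduct Q ≤ Q.extensionProduct P := by
  intro M ⟨Y, Z, f, g, w, hT, hY, hZ⟩
  obtain ⟨e, -, -⟩ := exists_iso_binaryBiproduct_of_distTriang _ hT (h hY hZ w)
  exact (Q.extensionProduct P).prop_of_iso (e ≪≫ biprod.braiding Y Z).symm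
    ⟨_, _, _, _, _, binaryBiproductTriangle_distinguished Z Y, hZ, hY⟩

lemma isTriangulatedClosed₂_extensionProduct [IsTriangulated C]
    [P.IsClosedUnderIsomorphisms] [P.IsTriangulatedClosed₂]
    [Q.IsClosedUnderIsomorphisms] [Q.IsTriangulatedClosed₂]
    (h : Q.extensionProduct P ≤ P.extensionProduct Q) :
    (P.extensionProduct Q).IsTriangulatedClosed₂ := by
  have hPP : P.extensionProduct P ≤ P :=
    ObjectProperty.extensionProduct_le_of_isTriangulatedClosed₂ le_rfl le_rfl
  have hQQ : Q.extensionProduct Q ≤ Q :=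
    ObjectProperty.extensionProduct_le_of_isTriangulatedClosed₂ le_rfl le_rfl
  have hPQ : (P.extensionProduct Q).extensionProduct (P.extensionProduct Q) ≤
      P.extensionProduct Q := calc
    _ = P.extensionProduct ((Q.extensionProduct P).extensionProduct Q) := by
      simp only [ObjectProperty.extensionProduct_assoc]
    _ ≤ P.extensionProduct ((P.extensionProduct Q).extensionProduct Q) :=
      ObjectProperty.monotone_extensionProduct_right _
        (ObjectProperty.monotone_extensionProduct_left _ h)
    _ = (P.extensionProduct P).extensionProduct (Q.extensionProduct Q) := by
      simp only [ObjectProperty.extensionProduct_assoc]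
    _ ≤ P.extensionProduct Q :=
      (ObjectProperty.monotone_extensionProduct_left _ hPP).trans
        (ObjectProperty.monotone_extensionProduct_right _ hQQ)
  exact .mk' fun T hT h₁ h₃ => hPQ _ ⟨_, _, _, _, _, hT, h₁, h₃⟩

lemma exists_comp_eq_of_leftOrthogonal {M X : C} (hM : P.extensionProduct Q M)
    (hX : Q.leftOrthogonal X) (g : X ⟶ M) :
    ∃ (M' : C) (g' : X ⟶ M') (i : M' ⟶ M), P M' ∧ g' ≫ i = g := by
  obtain ⟨M', N, i, p, w, hT, hM', hN⟩ := hM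
  obtain ⟨g', hg'⟩ := Triangle.coyoneda_exact₂ _ hT g (hX _ hN)
  exact ⟨M', g', i, hM', hg'.symm⟩

lemma exists_comp_eq_of_rightOrthogonal {M Y : C} (hM : P.extensionProduct Q M)
    (hY : P.rightOrthogonal Y) (g : M ⟶ Y) :
    ∃ (M' : C) (p : M ⟶ M') (g' : M' ⟶ Y), Q M' ∧ p ≫ g' = g := by
  obtain ⟨N, M', i, p, w, hT, hN, hM'⟩ := hM
  obtain ⟨g', hg'⟩ := Triangle.yoneda_exact₂ _ hT g (hY _ hN)
  exact ⟨M', p, g', hM', hg'.symm⟩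

end ExtensionProduct

section ShiftClosure

/-- The class `D_{[i,j]}` of the paper, i.e. `shiftClosure B i j`, bundled as an
`ObjectProperty`. -/
def shiftClosureIcc (B : Set C) (i j : ℤ) : ObjectProperty C :=
  extensionClosure {X | ∃ (Y : C) (l : ℤ), i ≤ l ∧ l ≤ j ∧ Y ∈ B ∧ X = Y⟦l⟧}

namespace shiftClosureIcc

variable {B : Set C} {i j : ℤ}

instance : (shiftClosureIcc B i j).ContainsZero :=
  inferInstanceAs (extensionClosure _).ContainsZero

instance : (shiftClosureIcc B i j).IsClosedUnderIsomorphisms :=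
  inferInstanceAs (extensionClosure _).IsClosedUnderIsomorphisms

instance : (shiftClosureIcc B i j).IsTriangulatedClosed₂ :=
  inferInstanceAs (extensionClosure _).IsTriangulatedClosed₂

lemma of_mem {Y : C} (hY : Y ∈ B) {l : ℤ} (hil : i ≤ l) (hlj : l ≤ j) :
    shiftClosureIcc B i j (Y⟦l⟧) :=
  extClosure.of _ ⟨Y, l, hil, hlj, hY, rfl⟩

lemma le_of_forall {P : ObjectProperty C} [P.ContainsZero] [P.IsClosedUnderIsomorphisms]
    [P.IsTriangulatedClosed₂] (h : ∀ Y ∈ B, ∀ l, i ≤ l → l ≤ j → P (Y⟦l⟧)) :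
    shiftClosureIcc B i j ≤ P := by
  apply extensionClosure.le_of_forall_mem
  rintro _ ⟨Y, l, hil, hlj, hY, rfl⟩
  exact h Y hY l hil hlj

lemma mono {i' j' : ℤ} (hi : i' ≤ i) (hj : j ≤ j') :
    shiftClosureIcc B i j ≤ shiftClosureIcc B i' j' :=
  le_of_forall fun _ hY _ hil hlj => of_mem hY (hi.trans hil) (hlj.trans hj)

lemma shift {M : C} (hM : shiftClosureIcc B i j M) (n : ℤ) {i' j' : ℤ} (hi : i + n = i')
    (hj : j + n = j') : shiftClosureIcc B i' j' (M⟦n⟧) := by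
  unfold shiftClosureIcc extensionClosure at hM
  induction hM with
  | of X hX =>
    obtain ⟨Y, l, hil, hlj, hY, rfl⟩ := hX
    exact ObjectProperty.prop_of_iso _ ((shiftFunctorAdd C l n).app Y)
      (of_mem hY (by lia) (by lia))
  | zero X hX => exact ObjectProperty.prop_of_isZero _ (Functor.map_isZero _ hX)
  | ext₂ T hT _ _ h₁ h₃ =>
    exact ObjectProperty.ext_of_isTriangulatedClosed₂ _ _ (Triangle.shift_distinguished T hT n)
      h₁ h₃

lemma zero_zero : shiftClosureIcc B 0 0 = extensionClosure B := by
  apply le_antisymm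
  · refine le_of_forall fun Y hY l hl hl' => ?_
    obtain rfl : l = 0 := le_antisymm hl' hl
    exact ObjectProperty.prop_of_iso _ ((shiftFunctorZero C ℤ).symm.app Y) (extClosure.of _ hY)
  · exact extensionClosure.le_of_forall_mem fun Y hY =>
      ObjectProperty.prop_of_iso _ ((shiftFunctorZero C ℤ).app Y) (of_mem hY le_rfl le_rfl)

lemma le_genSubcat : shiftClosureIcc B i j ≤ genSubcat B :=
  le_of_forall fun _ hY l _ _ => genSub.shift _ l (genSub.of _ hY)

lemma exists_of_genSubcat {M : C} (hM : genSubcat B M) : ∃ i j, shiftClosureIcc B i j M := by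
  induction hM with
  | of X hX => exact ⟨0, 0, by rw [zero_zero]; exact extClosure.of _ hX⟩
  | zero X hX => exact ⟨0, 0, ObjectProperty.prop_of_isZero _ hX⟩
  | shift X n _ h =>
    obtain ⟨i, j, h⟩ := h
    exact ⟨i + n, j + n, h.shift n rfl rfl⟩
  | ext₂ T hT _ _ h₁ h₃ =>
    obtain ⟨i, j, h₁⟩ := h₁
    obtain ⟨i', j', h₃⟩ := h₃
    exact ⟨min i i', max j j', ObjectProperty.ext_of_isTriangulatedClosed₂ _ T hT
      (mono (min_le_left _ _) (le_max_left _ _) _ h₁)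
      (mono (min_le_right _ _) (le_max_right _ _) _ h₃)⟩

lemma leftOrthogonal_of_forall {X : C} (h : ∀ Y ∈ B, ∀ l, i ≤ l → l ≤ j → ∀ f : X ⟶ Y⟦l⟧, f = 0) :
    (shiftClosureIcc B i j).leftOrthogonal X := by
  have hle : shiftClosureIcc B i j ≤ (ObjectProperty.singleton X).rightOrthogonal :=
    le_of_forall fun Y hY l hil hlj Z f hZ => by
      obtain rfl := (ObjectProperty.singleton_iff X Z).1 hZ
      exact h Y hY l hil hlj f
  exact fun M f hM => hle M hM f ((ObjectProperty.singleton_iff X X).2 rfl)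

lemma rightOrthogonal_of_forall {Y : C} (h : ∀ X ∈ B, ∀ l, i ≤ l → l ≤ j → ∀ f : X⟦l⟧ ⟶ Y, f = 0) :
    (shiftClosureIcc B i j).rightOrthogonal Y := by
  have hle : shiftClosureIcc B i j ≤ (ObjectProperty.singleton Y).leftOrthogonal :=
    le_of_forall fun X hX l hil hlj Z f hZ => by
      obtain rfl := (ObjectProperty.singleton_iff Y Z).1 hZ
      exact h X hX l hil hlj f
  exact fun M f hM => hle M hM f ((ObjectProperty.singleton_iff Y Y).2 rfl)

lemma le_leftOrthogonal (hB : HasWeaklyNegativeHoms B) {i' j' : ℤ} (hj : j + 2 ≤ i') :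
    shiftClosureIcc B i j ≤ (shiftClosureIcc B i' j').leftOrthogonal :=
  le_of_forall fun _ hP _ _ _ => leftOrthogonal_of_forall fun _ hQ _ _ _ f =>
    hB.shift_hom_eq_zero hP hQ (by lia) f

lemma le_extensionProduct [IsTriangulated C] (hB : HasWeaklyNegativeHoms B) {k k' : ℤ}
    (hk : k + 1 = k') :
    shiftClosureIcc B i j ≤ (shiftClosureIcc B i k).extensionProduct (shiftClosureIcc B k' j) := by
  have hswap : (shiftClosureIcc B k' j).extensionProduct (shiftClosureIcc B i k) ≤
      (shiftClosureIcc B i k).extensionProduct (shiftClosureIcc B k' j) :=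
    extensionProduct_le_swap fun Y Z hY hZ f =>
      le_leftOrthogonal hB (by lia) Z hZ f (hY.shift 1 rfl rfl)
  have := isTriangulatedClosed₂_extensionProduct hswap
  have : ((shiftClosureIcc B i k).extensionProduct (shiftClosureIcc B k' j)).ContainsZero :=
    ⟨0, isZero_zero _, ObjectProperty.le_extensionProduct_left _ _ (ObjectProperty.prop_zero _)⟩
  refine le_of_forall fun Y hY l hil hlj => ?_
  by_cases hl : l ≤ k
  · exact ObjectProperty.le_extensionProduct_left _ _ (of_mem hY hil hl)
  · exact ObjectProperty.le_extensionProduct_right _ _ (of_mem hY (by lia) hlj)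

end shiftClosureIcc

end ShiftClosure

section ConeRefinement

variable {P Q : ObjectProperty C}

lemma leftOrthogonal_of_trW {X Z : C} {q : Z ⟶ X} (hq : Q.trW q) (hX : P.leftOrthogonal X)
    (hQP : Q ≤ P.leftOrthogonal.shift (-1)) : P.leftOrthogonal Z := by
  obtain ⟨W, a, b, hT, hW⟩ := hq
  exact P.leftOrthogonal.ext_of_isTriangulatedClosed₂ _ (inv_rot_of_distTriang _ hT) (hQP W hW) hX

lemma exists_trW_comp_of_leftOrthogonal {X Z : C} {s : Z ⟶ X} (hs : (P.extensionProduct Q).trW s)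
    (hX : Q.leftOrthogonal X) : ∃ (Z' : C) (a : Z' ⟶ Z), P.trW (a ≫ s) := by
  obtain ⟨M, g, w, hT, hM⟩ := hs
  obtain ⟨M', g', i, hM', hg'⟩ := exists_comp_eq_of_leftOrthogonal hM hX g
  obtain ⟨Z', q, w', hT'⟩ := distinguished_cocone_triangle₁ g'
  have hqg : q ≫ g = 0 := by
    rw [← hg', reassoc_of% (show q ≫ g' = 0 from comp_distTriang_mor_zero₁₂ _ hT'), zero_comp]
  obtain ⟨a, ha : q = a ≫ s⟩ := Triangle.coyoneda_exact₂ _ hT q hqg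
  exact ⟨Z', a, ha ▸ ⟨M', g', w', hT', hM'⟩⟩

lemma exists_comp_eq_of_trW_extensionProduct [IsTriangulated C] {X Y Z : C} {s : Z ⟶ X}
    (hs : (P.extensionProduct Q).trW s)
    (hY : ∀ M, P M → ∀ f : M⟦(-1 : ℤ)⟧ ⟶ Y, f = 0) (f : Z ⟶ Y) :
    ∃ (Z' : C) (t : Z ⟶ Z') (q : Z' ⟶ X) (h : Z' ⟶ Y),
      P.trW t ∧ Q.trW q ∧ t ≫ q = s ∧ t ≫ h = f := by
  obtain ⟨M, g, w, hT, ⟨M₁, M₂, i, p, r, hM, hM₁, hM₂⟩⟩ := hs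
  obtain ⟨Z', q, w', hT'⟩ := distinguished_cocone_triangle₁ (g ≫ p)
  let o := Triangulated.someOctahedron' rfl hT hM hT'
  obtain ⟨h, hh⟩ := Triangle.yoneda_exact₂ _ (inv_rot_of_distTriang _ o.mem) f (hY _ hM₁ _)
  exact ⟨Z', o.m₁, q, h, ⟨_, _, _, o.mem, hM₁⟩, ⟨_, _, _, hT', hM₂⟩, o.comm₁, hh.symm⟩

lemma isoClosure_of_trW_extensionClosure [P.IsTriangulated] {B : Set C}
    (hBP : ∀ Q ∈ B, P Q) {X Z : C} (hPX : P X) {q : Z ⟶ X} (hq : (extensionClosure B).trW q) :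
    P.isoClosure Z := by
  obtain ⟨W, a, b, hT, hW⟩ := hq
  have hPW : P.isoClosure W :=
    extensionClosure.le_of_forall_mem (fun Q hQ => P.le_isoClosure Q (hBP Q hQ)) W hW
  exact P.isoClosure.ext_of_isTriangulatedClosed₁ _ hT (P.le_isoClosure X hPX) hPW

end ConeRefinement

section Localization

variable [IsTriangulated C] {E : Type u'} [Category.{v'} E] [HasZeroMorphisms E] (L : C ⥤ E)
  [L.PreservesZeroMorphisms]

lemma map_eq_zero_iff_exists_comp_eq (P : ObjectProperty C) [P.IsTriangulated]
    [L.IsLocalization P.trW] {X Y : C} (f : X ⟶ Y) :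
    L.map f = 0 ↔ ∃ (M : C) (g : X ⟶ M) (k : M ⟶ Y), P M ∧ g ≫ k = f := by
  rw [← L.map_zero, MorphismProperty.map_eq_iff_precomp L P.trW]
  constructor
  · rintro ⟨Z, s, ⟨M, g, w, hT, hM⟩, hs⟩
    obtain ⟨k, hk⟩ := Triangle.yoneda_exact₂ _ hT f (hs.trans comp_zero)
    exact ⟨M, g, k, hM, hk.symm⟩
  · rintro ⟨M, g, k, hM, rfl⟩
    obtain ⟨Z, s, w, hT⟩ := distinguished_cocone_triangle₁ g
    have hsg : s ≫ g = 0 := comp_distTriang_mor_zero₁₂ _ hT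
    exact ⟨Z, s, ⟨M, g, w, hT, hM⟩, by rw [reassoc_of% hsg, zero_comp, comp_zero]⟩

end Localization

section Roofs

variable [IsTriangulated C] {B : Set C} {X Y : C}

lemma exists_roof {E : Type u'} [Category.{v'} E] (L : C ⥤ E)
    [L.IsLocalization (genSubcat B).trW] (hB : HasWeaklyNegativeHoms B)
    (hX : ∀ Q ∈ B, ∀ i : ℤ, 1 ≤ i → ∀ f : X ⟶ Q⟦i⟧, f = 0)
    (hY : ∀ Q ∈ B, ∀ i : ℤ, i ≤ -2 → ∀ f : Q⟦i⟧ ⟶ Y, f = 0) (e : L.obj X ⟶ L.obj Y) :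
    ∃ (Z : C) (h : Z ⟶ Y) (q : Z ⟶ X), (extensionClosure B).trW q ∧ L.map q ≫ e = L.map h := by
  obtain ⟨φ, hφ⟩ := Localization.exists_rightFraction L (genSubcat B).trW e
  have he : L.map φ.s ≫ e = L.map φ.f := by
    rw [hφ, MorphismProperty.RightFraction.map_s_comp_map]
  obtain ⟨M, g, w, hT, hM⟩ := φ.hs
  obtain ⟨i, j, hM⟩ := shiftClosureIcc.exists_of_genSubcat hM
  obtain ⟨Z₁, a, ha⟩ := exists_trW_comp_of_leftOrthogonal
    ⟨M, g, w, hT, shiftClosureIcc.le_extensionProduct hB (zero_add 1) M hM⟩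
    (shiftClosureIcc.leftOrthogonal_of_forall fun Q hQ l hl _ => hX Q hQ l hl)
  obtain ⟨Z, t, q, h, ht, hq, hts, hth⟩ := exists_comp_eq_of_trW_extensionProduct
    (ObjectProperty.trW_monotone
      (shiftClosureIcc.le_extensionProduct (k := -1) hB (neg_add_cancel 1)) _ ha)
    (fun N hN f => shiftClosureIcc.rightOrthogonal_of_forall
      (fun Q hQ l _ hl => hY Q hQ l hl) f
      (hN.shift (-1) rfl rfl)) (a ≫ φ.f)
  have : IsIso (L.map t) := Localization.inverts L _ _
    (ObjectProperty.trW_monotone shiftClosureIcc.le_genSubcat _ ht)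
  rw [shiftClosureIcc.zero_zero] at hq
  refine ⟨Z, h, q, hq, ?_⟩
  rw [← cancel_epi (L.map t), ← L.map_comp, hth, ← L.map_comp_assoc, hts, L.map_comp,
    Category.assoc, he, L.map_comp]

lemma exists_comp_eq_of_genSubcat (hB : HasWeaklyNegativeHoms B) {Z M : C}
    (hZ : ∀ j, (shiftClosureIcc B 1 j).leftOrthogonal Z)
    (hY : ∀ Q ∈ B, ∀ i : ℤ, i ≤ -2 → ∀ f : Q⟦i⟧ ⟶ Y, f = 0)
    (hM : genSubcat B M) (g : Z ⟶ M) (k : M ⟶ Y) :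
    ∃ (T : C) (a : Z ⟶ T) (b : T ⟶ Y), shiftClosureIcc B (-1) 0 T ∧ a ≫ b = g ≫ k := by
  obtain ⟨i, j, hM⟩ := shiftClosureIcc.exists_of_genSubcat hM
  obtain ⟨M', g', ι, hM', hg'⟩ := exists_comp_eq_of_leftOrthogonal
    (shiftClosureIcc.le_extensionProduct hB (zero_add 1) M hM) (hZ j) g
  obtain ⟨T, p, b, hT, hpb⟩ := exists_comp_eq_of_rightOrthogonal
    (shiftClosureIcc.le_extensionProduct (k := -2) (k' := -1) hB rfl M' hM')
    (shiftClosureIcc.rightOrthogonal_of_forall fun Q hQ l _ hl => hY Q hQ l hl) (ι ≫ k)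
  exact ⟨T, g' ≫ p, b, hT, by rw [Category.assoc, hpb, reassoc_of% hg']⟩

lemma map_eq_zero_iff_of_trW_extensionClosure {E : Type u'} [Category.{v'} E] [HasZeroMorphisms E]
    (L : C ⥤ E) [L.PreservesZeroMorphisms] [L.IsLocalization (genSubcat B).trW]
    (hB : HasWeaklyNegativeHoms B)
    (hX : ∀ Q ∈ B, ∀ i : ℤ, 1 ≤ i → ∀ f : X ⟶ Q⟦i⟧, f = 0)
    (hY : ∀ Q ∈ B, ∀ i : ℤ, i ≤ -2 → ∀ f : Q⟦i⟧ ⟶ Y, f = 0)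
    {Z : C} {q : Z ⟶ X} (hq : (extensionClosure B).trW q) (h : Z ⟶ Y) :
    L.map h = 0 ↔ ∃ (T : C) (a : Z ⟶ T) (b : T ⟶ Y), a ≫ b = h ∧
      ((extensionClosure B).shift (1 : ℤ)).extensionProduct (extensionClosure B) T := by
  rw [map_eq_zero_iff_exists_comp_eq L (genSubcat B)]
  constructor
  · rintro ⟨M, g, k, hM, rfl⟩
    have hZ (j : ℤ) : (shiftClosureIcc B 1 j).leftOrthogonal Z := by
      refine leftOrthogonal_of_trW hq
        (shiftClosureIcc.leftOrthogonal_of_forall fun Q hQ l hl _ => hX Q hQ l hl) ?_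
      rw [← shiftClosureIcc.zero_zero]
      exact fun W hW => shiftClosureIcc.le_leftOrthogonal hB (by simp) _ (hW.shift (-1) rfl rfl)
    obtain ⟨T, a, b, hT, hab⟩ := exists_comp_eq_of_genSubcat hB hZ hY hM g k
    refine ⟨T, a, b, hab, ?_⟩
    rw [← shiftClosureIcc.zero_zero]
    refine ObjectProperty.monotone_extensionProduct_left _ (fun N hN => hN.shift 1 rfl rfl) _
      (shiftClosureIcc.le_extensionProduct (k := -1) hB (neg_add_cancel 1) T hT)
  · rintro ⟨T, a, b, hab, hT⟩
    have hshift : (extensionClosure B).shift (1 : ℤ) ≤ genSubcat B := fun N hN =>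
      ((genSubcat B).prop_shift_iff_of_isStableUnderShift N (1 : ℤ)).1
        (extensionClosure.le_genSubcat B _ hN)
    exact ⟨T, a, b, ObjectProperty.extensionProduct_le_of_isTriangulatedClosed₂ hshift
      (extensionClosure.le_genSubcat B) T hT, hab⟩

/-- `P` plays the role of the subcategory `K^b(A)` of `K(A)`, in which roofs are to be found. -/
theorem statement8_general (hB : HasWeaklyNegativeHoms B)
    {P : ObjectProperty C} [P.IsTriangulated] (hBP : ∀ Q ∈ B, P Q) (hPX : P X)
    (hX : ∀ Q ∈ B, ∀ i : ℤ, 1 ≤ i → ∀ f : X ⟶ Q⟦i⟧, f = 0)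
    (hY : ∀ Q ∈ B, ∀ i : ℤ, i ≤ -2 → ∀ f : Q⟦i⟧ ⟶ Y, f = 0)
    {E : Type u'} [Category.{v'} E] [HasZeroMorphisms E] (L : C ⥤ E)
    [L.PreservesZeroMorphisms] [L.IsLocalization (genSubcat B).trW] :
    (∀ e : L.obj X ⟶ L.obj Y, ∃ Z : C, P Z ∧ ∃ (h : Z ⟶ Y) (q : Z ⟶ X),
      (extensionClosure B).trW q ∧ IsIso (L.map q) ∧ L.map q ≫ e = L.map h) ∧
    (∀ (e : L.obj X ⟶ L.obj Y) (Z : C) (h : Z ⟶ Y) (q : Z ⟶ X),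
      (extensionClosure B).trW q → L.map q ≫ e = L.map h →
      (e = 0 ↔ ∃ (T : C) (a : Z ⟶ T) (b : T ⟶ Y), a ≫ b = h ∧
        ((extensionClosure B).shift (1 : ℤ)).extensionProduct (extensionClosure B) T)) := by
  have hiso {Z : C} {q : Z ⟶ X} (hq : (extensionClosure B).trW q) : IsIso (L.map q) :=
    Localization.inverts L _ q (ObjectProperty.trW_monotone (extensionClosure.le_genSubcat B) q hq)
  refine ⟨fun e => ?_, fun e Z h q hq he => ?_⟩
  · obtain ⟨Z, h, q, hq, he⟩ := exists_roof L hB hX hY e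
    obtain ⟨Z', hZ', ⟨i⟩⟩ := isoClosure_of_trW_extensionClosure hBP hPX hq
    have hq' := ((extensionClosure B).trW.cancel_left_of_respectsIso i.inv q).2 hq
    exact ⟨Z', hZ', i.inv ≫ h, i.inv ≫ q, hq', hiso hq', by
      simp only [L.map_comp, Category.assoc, he]⟩
  · have := hiso hq
    rw [← map_eq_zero_iff_of_trW_extensionClosure L hB hX hY hq h, ← he]
    exact ⟨fun h₀ => by rw [h₀, comp_zero],
      fun h₀ => by rw [← cancel_epi (L.map q), h₀, comp_zero]⟩

end Roofs

end TriangulatedCategory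

section HomotopyCategory

variable {A : Type u} [Category.{v} A] [Preadditive A]

lemma homotopyQ_hom_eq_zero {K L : CochainComplex A ℤ} (a b : ℤ) (hab : a < b)
    [K.IsStrictlyGE b] [L.IsStrictlyLE a] (f : homotopyQ.obj K ⟶ homotopyQ.obj L) : f = 0 := by
  obtain ⟨g, rfl⟩ := homotopyQ.map_surjective f
  have hg : g = 0 := by
    ext i
    rcases lt_or_ge i b with hi | hi
    · exact (K.isZero_of_isStrictlyGE b i hi).eq_of_src _ _
    · exact (L.isZero_of_isStrictlyLE a i (by lia)).eq_of_tgt _ _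
  rw [hg, Functor.map_zero]

variable [HasZeroObject A]

lemma isZero_twoComplex_X (n : ℤ) {P Q : A} (f : P ⟶ Q) {i : ℤ} (hi : i ≠ n) (hi' : i ≠ n + 1) :
    IsZero ((twoComplex n f).X i) := by
  dsimp only [twoComplex]
  rw [if_neg hi, if_neg hi']
  exact isZero_zero A

instance (n : ℤ) {P Q : A} (f : P ⟶ Q) : (twoComplex n f).IsStrictlyGE n :=
  (CochainComplex.isStrictlyGE_iff _ n).2 fun _ _ => isZero_twoComplex_X n f (by lia) (by lia)

lemma isStrictlyLE_twoComplex {n m : ℤ} (hnm : n + 1 = m) {P Q : A} (f : P ⟶ Q) :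
    (twoComplex n f).IsStrictlyLE m :=
  (CochainComplex.isStrictlyLE_iff _ m).2 fun _ _ => isZero_twoComplex_X n f (by lia) (by lia)

lemma hasWeaklyNegativeHoms_coneSet (S : MorphismProperty A) :
    HasWeaklyNegativeHoms (coneSet S) := by
  rintro _ ⟨P, Q, s, -, rfl⟩ _ ⟨P', Q', s', -, rfl⟩ i hi
  have := isStrictlyLE_twoComplex (neg_add_cancel 1) s'
  have := (twoComplex (-1) s').isStrictlyLE_shift 0 i (-i) (by lia)
  rw [HomotopyCategory.shift_quotient_obj]
  exact homotopyQ_hom_eq_zero (-i) (-1) (by lia)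

lemma iotaA_hom_shift_coneSet_eq_zero (S : MorphismProperty A) (X : A) :
    ∀ Q ∈ coneSet S, ∀ i : ℤ, 1 ≤ i → ∀ f : iotaA.obj X ⟶ Q⟦i⟧, f = 0 := by
  rintro _ ⟨P, Q, s, -, rfl⟩ i hi
  have := isStrictlyLE_twoComplex (neg_add_cancel 1) s
  have := (twoComplex (-1) s).isStrictlyLE_shift 0 i (-i) (by lia)
  rw [HomotopyCategory.shift_quotient_obj]
  exact homotopyQ_hom_eq_zero (-i) 0 (by lia)

lemma shift_coneSet_hom_iotaA_eq_zero (S : MorphismProperty A) (Y : A) :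
    ∀ Q ∈ coneSet S, ∀ i : ℤ, i ≤ -2 → ∀ f : Q⟦i⟧ ⟶ iotaA.obj Y, f = 0 := by
  rintro _ ⟨P, Q, s, -, rfl⟩ i hi
  have := (twoComplex (-1) s).isStrictlyGE_shift (-1) i (-1 - i) (by lia)
  rw [HomotopyCategory.shift_quotient_obj]
  exact homotopyQ_hom_eq_zero 0 (-1 - i) (by lia)

variable [HasFiniteBiproducts A]

variable (A) in
/-- `K^b(A)`, as a full subcategory of `K(A)`: the predicate `boundedK` bundled as an
`ObjectProperty`. -/
def boundedObjects : ObjectProperty (HomotopyCategory A (ComplexShape.up ℤ)) :=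
  boundedK

namespace boundedObjects

instance : (boundedObjects A).ContainsZero where
  exists_zero := ⟨homotopyQ.obj 0, Functor.map_isZero _ (isZero_zero _), 0, 0, fun i _ =>
    Functor.map_isZero (HomologicalComplex.eval A (ComplexShape.up ℤ) i) (isZero_zero _)⟩

instance : (boundedObjects A).IsStableUnderShift ℤ where
  isStableUnderShiftBy n :=
    { le_shift K hK := by
        obtain ⟨a, b, h⟩ := hK
        obtain ⟨K : CochainComplex A ℤ, rfl⟩ := K.quotient_obj_surjective
        rw [ObjectProperty.prop_shift_iff, HomotopyCategory.shift_quotient_obj]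
        exact ⟨a - n, b - n, fun i hi => h (i + n) (by lia)⟩ }

instance : (boundedObjects A).IsTriangulatedClosed₃ where
  ext₃' T hT h₁ h₂ := by
    obtain ⟨a, b, h₁⟩ := h₁
    obtain ⟨c, d, h₂⟩ := h₂
    obtain ⟨f, hf⟩ := homotopyQ.map_surjective (X := T.obj₁.as) (Y := T.obj₂.as) T.mor₁
    let e := isoTriangleOfIso₁₂ T _ hT
      (HomotopyCategory.mappingCone_triangleh_distinguished f) (Iso.refl _) (Iso.refl _)
      ((Category.comp_id _).trans (hf.symm.trans (Category.id_comp _).symm))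
    refine ⟨_, ⟨min (a - 1) c, max b d, fun i hi => ?_⟩, ⟨Triangle.π₃.mapIso e⟩⟩
    exact (CochainComplex.mappingCone.isZero_X_iff f i).2 ⟨h₁ _ (by lia), h₂ _ (by lia)⟩

instance : (boundedObjects A).IsTriangulated where
  toIsTriangulatedClosed₂ := .of_isTriangulatedClosed₃

lemma of_mem_coneSet {S : MorphismProperty A} : ∀ Q ∈ coneSet S, boundedObjects A Q := by
  rintro _ ⟨P, Q, s, -, rfl⟩
  exact ⟨-1, 0, fun i hi => isZero_twoComplex_X _ _ (by lia) (by lia)⟩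

lemma iotaA_obj (X : A) : boundedObjects A (iotaA.obj X) :=
  ⟨0, 0, fun _ hi => HomologicalComplex.isZero_single_obj_X _ _ _ _ (by lia)⟩

end boundedObjects

end HomotopyCategory

/-- Proposition: roofs presenting morphisms between objects of `A` in `K^b(A)/𝔻`, with
cone in the extension-closure `D` of the set of cones of elements of `S`, and the
criterion for the vanishing of such a morphism. -/
theorem statement8 {A : Type u} [Category.{v} A] [Preadditive A] [HasZeroObject A]
    [HasFiniteBiproducts A] (S : MorphismProperty A) (X Y : A) :
    (∀ e : (uBig S).obj X ⟶ (uBig S).obj Y,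
      ∃ Z : HomotopyCategory A (ComplexShape.up ℤ), boundedK Z ∧
        ∃ (h : Z ⟶ iotaA.obj Y) (q : Z ⟶ iotaA.obj X),
          (∃ (W' : HomotopyCategory A (ComplexShape.up ℤ)) (a : iotaA.obj X ⟶ W')
            (b : W' ⟶ Z⟦(1 : ℤ)⟧),
            (Triangle.mk q a b ∈ distTriang (HomotopyCategory A (ComplexShape.up ℤ))) ∧
            extClosure (coneSet S) W') ∧
          IsIso ((locQ S).map q) ∧ (locQ S).map q ≫ e = (locQ S).map h) ∧
    (∀ (e : (uBig S).obj X ⟶ (uBig S).obj Y) (Z : HomotopyCategory A (ComplexShape.up ℤ))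
      (h : Z ⟶ iotaA.obj Y) (q : Z ⟶ iotaA.obj X),
      (∃ (W' : HomotopyCategory A (ComplexShape.up ℤ)) (a : iotaA.obj X ⟶ W')
        (b : W' ⟶ Z⟦(1 : ℤ)⟧),
        (Triangle.mk q a b ∈ distTriang (HomotopyCategory A (ComplexShape.up ℤ))) ∧
        extClosure (coneSet S) W') →
      IsIso ((locQ S).map q) → (locQ S).map q ≫ e = (locQ S).map h →
      (e = 0 ↔
        ∃ (T : HomotopyCategory A (ComplexShape.up ℤ)) (a' : Z ⟶ T)
          (b' : T ⟶ iotaA.obj Y), a' ≫ b' = h ∧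
          ∃ (Cm C0 : HomotopyCategory A (ComplexShape.up ℤ)) (x : Cm ⟶ T) (y : T ⟶ C0)
            (z : C0 ⟶ Cm⟦(1 : ℤ)⟧),
            (Triangle.mk x y z ∈ distTriang (HomotopyCategory A (ComplexShape.up ℤ))) ∧
            extClosure (coneSet S) (Cm⟦(1 : ℤ)⟧) ∧ extClosure (coneSet S) C0)) := by
  obtain ⟨h₁, h₂⟩ := statement8_general (Y := iotaA.obj Y) (hasWeaklyNegativeHoms_coneSet S)
    boundedObjects.of_mem_coneSet (boundedObjects.iotaA_obj X)
    (iotaA_hom_shift_coneSet_eq_zero S X) (shift_coneSet_hom_iotaA_eq_zero S Y) (locQ S)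
  simp only [ObjectProperty.trW_iff, exists_prop] at h₁ h₂
  exact ⟨h₁, fun e Z h q hq _ => h₂ e Z h q hq⟩
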